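/- Suppose the linear homogeneous system x(t+1) = A(t)x(t) admits an exponential dichotomy with projection P and constants α₁, α₂, β₁, β₂, and suppose (θ_k) is a sequence of integers such that A(t+θ_k) converges to Ā(t) as k → ∞ for each t ∈ ℤ, where each Ā(t) is invertible. Then the sequence of operators X(t₀+θ_k) P X(t₀+θ_k)⁻¹ converges in B(𝒳) as k → ∞. -/

import Mathlib

open Filter Topology

/-!
Let `Q` and `Q'` be the dichotomy projections at time `t` of two systems with coefficients `A`, `A'`
and the same dichotomy rates. Then `Q - Q' = Q (1 - Q') - (1 - Q) Q'`. The first product is the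
value at `s = t` of `X t P (X s)⁻¹ · X' s (1 - P') (X' t)⁻¹`. As `s` runs to `-∞`, this tends to
`0` at a rate independent of the system, and a step from `s + 1` to `s` changes it by
`X t P (X (s + 1))⁻¹ (A' s - A s) X' s (1 - P') (X' t)⁻¹`. The second product is handled in the same
way with `s` running to `+∞`. Hence `Q - Q'` is controlled by finitely many of the differences
`A s - A' s`, up to an arbitrarily small error, and pointwise convergence of the coefficients makes
the projections a Cauchy family.
-/

section Dichotomy

variable {R : Type*} [NormedRing R]

/-- `X` is a fundamental solution of `x (t + 1) = A t * x t` with pointwise inverse `Xinv`. -/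
structure IsFundamentalSolution (A X Xinv : ℤ → R) : Prop where
  map_add_one : ∀ t, X (t + 1) = A t * X t
  mul_inv : ∀ t, X t * Xinv t = 1
  inv_mul : ∀ t, Xinv t * X t = 1

/-- The fundamental solution `X` satisfies the estimates of a dichotomy with splitting
`1 = P + (1 - P)`: over `n` steps, the stable part is bounded by `b n` forwards in time and the
unstable part by `c n` backwards. Geometric rates `b`, `c` give an exponential dichotomy. -/
structure HasDichotomyEstimates (A X Xinv : ℤ → R) (P : R) (b c : ℕ → ℝ) : Prop
    extends IsFundamentalSolution A X Xinv where
  norm_stable_le : ∀ (t : ℤ) (n : ℕ), ‖X (t + n) * P * Xinv t‖ ≤ b n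
  norm_unstable_le : ∀ (t : ℤ) (n : ℕ), ‖X t * (1 - P) * Xinv (t + n)‖ ≤ c n

variable {A X Xinv A' X' Xinv' : ℤ → R} {P P' : R} {b c : ℕ → ℝ}

namespace IsFundamentalSolution

theorem inv_add_one_mul (h : IsFundamentalSolution A X Xinv) (t : ℤ) :
    Xinv (t + 1) * A t = Xinv t :=
  calc Xinv (t + 1) * A t = Xinv (t + 1) * (A t * X t) * Xinv t := by
        rw [mul_assoc, mul_assoc (A t), h.mul_inv, mul_one]
    _ = Xinv t := by rw [← h.map_add_one, h.inv_mul, one_mul]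

theorem mul_one_sub_mul_inv (h : IsFundamentalSolution A X Xinv) (p : R) (t : ℤ) :
    X t * (1 - p) * Xinv t = 1 - X t * p * Xinv t := by
  rw [mul_sub, sub_mul, mul_one, h.mul_inv]

theorem norm_mul_inv_mul_mul_sub_le (h : IsFundamentalSolution A X Xinv)
    (h' : IsFundamentalSolution A' X' Xinv') (p q : R) (t : ℤ) :
    ‖p * Xinv (t + 1) * (X' (t + 1) * q) - p * Xinv t * (X' t * q)‖ ≤
      ‖p * Xinv (t + 1)‖ * ‖X' t * q‖ * ‖A t - A' t‖ := by
  have factor : p * Xinv (t + 1) * (X' (t + 1) * q) - p * Xinv t * (X' t * q) =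
      p * Xinv (t + 1) * (A' t - A t) * (X' t * q) := by
    rw [h'.map_add_one, ← h.inv_add_one_mul t]
    noncomm_ring
  rw [factor, norm_sub_rev, mul_right_comm]
  exact norm_mul₃_le

end IsFundamentalSolution

namespace HasDichotomyEstimates

theorem of_exponential {β₁ γ₁ β₂ γ₂ : ℝ} (h : IsFundamentalSolution A X Xinv)
    (hstable : ∀ s t : ℤ, s ≤ t → ‖X t * P * Xinv s‖ ≤ β₁ * γ₁ ^ (s - t))
    (hunstable : ∀ s t : ℤ, t ≤ s → ‖X t * (1 - P) * Xinv s‖ ≤ β₂ * γ₂ ^ (t - s)) :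
    HasDichotomyEstimates A X Xinv P (fun n ↦ β₁ * γ₁⁻¹ ^ n) (fun n ↦ β₂ * γ₂⁻¹ ^ n) where
  toIsFundamentalSolution := h
  norm_stable_le t n := by simpa using hstable t (t + n) (by simp)
  norm_unstable_le t n := by simpa using hunstable (t + n) t (by simp)

theorem translate (h : HasDichotomyEstimates A X Xinv P b c) (τ : ℤ) :
    HasDichotomyEstimates (fun t ↦ A (t + τ)) (fun t ↦ X (t + τ)) (fun t ↦ Xinv (t + τ)) P b c where
  map_add_one t := by rw [add_right_comm, h.map_add_one]
  mul_inv t := h.mul_inv (t + τ)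
  inv_mul t := h.inv_mul (t + τ)
  norm_stable_le t n := by rw [add_right_comm]; exact h.norm_stable_le (t + τ) n
  norm_unstable_le t n := by rw [add_right_comm]; exact h.norm_unstable_le (t + τ) n

theorem norm_stable_sub_le (h : HasDichotomyEstimates A X Xinv P b c) (t : ℤ) (n : ℕ) :
    ‖X t * P * Xinv (t - n)‖ ≤ b n := by
  simpa using h.norm_stable_le (t - n) n

theorem norm_unstable_sub_le (h : HasDichotomyEstimates A X Xinv P b c) (t : ℤ) (n : ℕ) :
    ‖X (t - n) * (1 - P) * Xinv t‖ ≤ c n := by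
  simpa using h.norm_unstable_le (t - n) n

theorem norm_proj_mul_one_sub_proj_le (h : HasDichotomyEstimates A X Xinv P b c)
    (h' : HasDichotomyEstimates A' X' Xinv' P' b c) (t : ℤ) (n : ℕ) :
    ‖X t * P * Xinv t * (X' t * (1 - P') * Xinv' t)‖ ≤
      b n * c n + ∑ j ∈ Finset.range n, b j * c (j + 1) * ‖A (t - (j + 1)) - A' (t - (j + 1))‖ := by
  let u (j : ℕ) : R := X t * P * Xinv (t - j) * (X' (t - j) * (1 - P') * Xinv' t)
  have norm_u_le : ‖u n‖ ≤ b n * c n :=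
    norm_mul_le_of_le (h.norm_stable_sub_le t n) (h'.norm_unstable_sub_le t n)
  have dist_u_le (j : ℕ) :
      dist (u j) (u (j + 1)) ≤ b j * c (j + 1) * ‖A (t - (j + 1)) - A' (t - (j + 1))‖ := by
    have stable := h.norm_stable_sub_le t j
    have unstable := h'.norm_unstable_sub_le t (j + 1)
    have step := h.norm_mul_inv_mul_mul_sub_le h'.toIsFundamentalSolution
      (X t * P) ((1 - P') * Xinv' t) (t - (j + 1))
    rw [show t - ((j : ℤ) + 1) + 1 = t - j by ring] at step
    simp only [← mul_assoc (X' _)] at step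
    push_cast at unstable
    simp only [u, dist_eq_norm]
    push_cast
    refine step.trans ?_
    gcongr
    exact (norm_nonneg _).trans stable
  calc ‖X t * P * Xinv t * (X' t * (1 - P') * Xinv' t)‖ = ‖u 0‖ := by simp [u]
    _ ≤ ‖u n‖ + dist (u 0) (u n) := by
      rw [dist_eq_norm]; exact norm_le_norm_add_norm_sub' _ _
    _ ≤ _ := add_le_add norm_u_le (dist_le_range_sum_of_dist_le n fun _ ↦ dist_u_le _)

theorem norm_one_sub_proj_mul_proj_le (h : HasDichotomyEstimates A X Xinv P b c)
    (h' : HasDichotomyEstimates A' X' Xinv' P' b c) (t : ℤ) (n : ℕ) :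
    ‖X t * (1 - P) * Xinv t * (X' t * P' * Xinv' t)‖ ≤
      b n * c n + ∑ j ∈ Finset.range n, b j * c (j + 1) * ‖A (t + j) - A' (t + j)‖ := by
  let v (j : ℕ) : R := X t * (1 - P) * Xinv (t + j) * (X' (t + j) * P' * Xinv' t)
  have norm_v_le : ‖v n‖ ≤ b n * c n := by
    rw [mul_comm (b n)]
    exact norm_mul_le_of_le (h.norm_unstable_le t n) (h'.norm_stable_le t n)
  have dist_v_le (j : ℕ) :
      dist (v j) (v (j + 1)) ≤ b j * c (j + 1) * ‖A (t + j) - A' (t + j)‖ := by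
    have unstable := h.norm_unstable_le t (j + 1)
    have stable := h'.norm_stable_le t j
    have step := h.norm_mul_inv_mul_mul_sub_le h'.toIsFundamentalSolution
      (X t * (1 - P)) (P' * Xinv' t) (t + j)
    simp only [← mul_assoc (X' _)] at step
    push_cast [← add_assoc] at unstable
    rw [dist_comm, mul_comm (b j)]
    simp only [v, dist_eq_norm]
    push_cast [← add_assoc]
    refine step.trans ?_
    gcongr
    exact (norm_nonneg _).trans unstable
  calc ‖X t * (1 - P) * Xinv t * (X' t * P' * Xinv' t)‖ = ‖v 0‖ := by simp [v]
    _ ≤ ‖v n‖ + dist (v 0) (v n) := by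
      rw [dist_eq_norm]; exact norm_le_norm_add_norm_sub' _ _
    _ ≤ _ := add_le_add norm_v_le (dist_le_range_sum_of_dist_le n fun _ ↦ dist_v_le _)

theorem norm_proj_sub_proj_le (h : HasDichotomyEstimates A X Xinv P b c)
    (h' : HasDichotomyEstimates A' X' Xinv' P' b c) (t : ℤ) (n : ℕ) :
    ‖X t * P * Xinv t - X' t * P' * Xinv' t‖ ≤
      2 * (b n * c n) + ∑ j ∈ Finset.range n, b j * c (j + 1) *
        (‖A (t - (j + 1)) - A' (t - (j + 1))‖ + ‖A (t + j) - A' (t + j)‖) := by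
  have split : X t * P * Xinv t - X' t * P' * Xinv' t =
      X t * P * Xinv t * (X' t * (1 - P') * Xinv' t) -
        X t * (1 - P) * Xinv t * (X' t * P' * Xinv' t) := by
    rw [h.mul_one_sub_mul_inv, h'.mul_one_sub_mul_inv, mul_sub, sub_mul, mul_one, one_mul,
      sub_sub_sub_cancel_right]
  calc ‖X t * P * Xinv t - X' t * P' * Xinv' t‖
      ≤ ‖X t * P * Xinv t * (X' t * (1 - P') * Xinv' t)‖ +
          ‖X t * (1 - P) * Xinv t * (X' t * P' * Xinv' t)‖ := split ▸ norm_sub_le _ _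
    _ ≤ _ := add_le_add (h.norm_proj_mul_one_sub_proj_le h' t n)
          (h.norm_one_sub_proj_mul_proj_le h' t n)
    _ = _ := by simp only [mul_add, Finset.sum_add_distrib]; ring

end HasDichotomyEstimates

theorem tendsto_geometric_rates_mul {γ₁ γ₂ : ℝ} (hγ : 1 < γ₁ * γ₂) (β₁ β₂ : ℝ) :
    Tendsto (fun n : ℕ ↦ β₁ * γ₁⁻¹ ^ n * (β₂ * γ₂⁻¹ ^ n)) atTop (𝓝 0) := by
  have geometric : Tendsto (fun n : ℕ ↦ (γ₁ * γ₂)⁻¹ ^ n) atTop (𝓝 0) :=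
    tendsto_pow_atTop_nhds_zero_of_lt_one (inv_pos.2 (one_pos.trans hγ)).le
      (inv_lt_one_of_one_lt₀ hγ)
  convert geometric.const_mul (β₁ * β₂) using 2
  · rw [mul_inv, mul_pow]; ring
  · rw [mul_zero]

theorem tendsto_zero_of_forall_le_add {α : Type*} {l : Filter α} {f : α → ℝ} {a : ℕ → ℝ}
    {g : ℕ → α → ℝ} (hf : ∀ x, 0 ≤ f x) (hfg : ∀ n x, f x ≤ a n + g n x)
    (ha : Tendsto a atTop (𝓝 0)) (hg : ∀ n, Tendsto (g n) l (𝓝 0)) : Tendsto f l (𝓝 0) := by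
  refine tendsto_order.2 ⟨fun ε hε ↦ .of_forall fun x ↦ hε.trans_le (hf x), fun ε hε ↦ ?_⟩
  obtain ⟨n, hn⟩ := (ha.eventually_lt_const (half_pos hε)).exists
  filter_upwards [(hg n).eventually_lt_const (half_pos hε)] with x hx
  linarith [hfg n x]

theorem stmt_6_general [CompleteSpace R] {ι : Type*} {l : Filter ι} [l.NeBot]
    {A X Xinv : ι → ℤ → R} {P : ι → R} {b c : ℕ → ℝ} {Abar : ℤ → R}
    (hd : ∀ i, HasDichotomyEstimates (A i) (X i) (Xinv i) (P i) b c)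
    (hbc : Tendsto (fun n ↦ b n * c n) atTop (𝓝 0))
    (hA : ∀ t, Tendsto (fun i ↦ A i t) l (𝓝 (Abar t))) (t : ℤ) :
    ∃ L, Tendsto (fun i ↦ X i t * P i * Xinv i t) l (𝓝 L) := by
  have coeff_sub (s : ℤ) : Tendsto (fun p : ι × ι ↦ ‖A p.1 s - A p.2 s‖) (l ×ˢ l) (𝓝 0) := by
    simpa using (((hA s).comp tendsto_fst).sub ((hA s).comp tendsto_snd)).norm
  have weighted_sum (n : ℕ) : Tendsto (fun p : ι × ι ↦ ∑ j ∈ Finset.range n, b j * c (j + 1) *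
      (‖A p.1 (t - (j + 1)) - A p.2 (t - (j + 1))‖ + ‖A p.1 (t + j) - A p.2 (t + j)‖))
      (l ×ˢ l) (𝓝 0) := by
    simpa using tendsto_finsetSum (Finset.range n) fun j _ ↦
      ((coeff_sub (t - (j + 1))).add (coeff_sub (t + j))).const_mul (b j * c (j + 1))
  rw [← cauchy_map_iff_exists_tendsto, cauchy_map_iff', tendsto_uniformity_iff_dist_tendsto_zero]
  simp only [dist_eq_norm]
  exact tendsto_zero_of_forall_le_add (fun _ ↦ norm_nonneg _)
    (fun n p ↦ (hd p.1).norm_proj_sub_proj_le (hd p.2) t n)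
    (by simpa using hbc.const_mul 2) weighted_sum

end Dichotomy

/-- Under an exponential dichotomy with projection `P`, if `(θ_k)` is a
sequence of integers with `A(t+θ_k) → Ā(t)` for each `t`, where each `Ā(t)` is invertible,
then the sequence of operators `X(t₀+θ_k) P X(t₀+θ_k)⁻¹` converges in `B(𝒳)`. -/
theorem stmt_6 {𝕏 : Type*} [NormedAddCommGroup 𝕏] [NormedSpace ℝ 𝕏] [CompleteSpace 𝕏]
    (A X Xinv : ℤ → 𝕏 →L[ℝ] 𝕏) (t₀ : ℤ)
    (hX : ∀ t : ℤ, X (t + 1) = A t * X t) (hX0 : X t₀ = 1)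
    (hXinv : ∀ t : ℤ, X t * Xinv t = 1) (hXinv' : ∀ t : ℤ, Xinv t * X t = 1)
    (P : 𝕏 →L[ℝ] 𝕏) (hP : P * P = P)
    (α₁ α₂ β₁ β₂ : ℝ) (hα₁ : 0 < α₁) (hα₂ : 0 < α₂) (hβ₁ : 0 < β₁) (hβ₂ : 0 < β₂)
    (hd₁ : ∀ s t : ℤ, s ≤ t → ‖X t * P * Xinv s‖ ≤ β₁ * (1 + α₁) ^ (s - t))
    (hd₂ : ∀ s t : ℤ, t ≤ s → ‖X t * (1 - P) * Xinv s‖ ≤ β₂ * (1 + α₂) ^ (t - s))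
    (θ : ℕ → ℤ) (Abar AbarInv : ℤ → 𝕏 →L[ℝ] 𝕏)
    (hconv : ∀ t : ℤ, Tendsto (fun k => A (t + θ k)) atTop (𝓝 (Abar t)))
    (hAbarInv : ∀ t : ℤ, Abar t * AbarInv t = 1) (hAbarInv' : ∀ t : ℤ, AbarInv t * Abar t = 1) :
    ∃ L : 𝕏 →L[ℝ] 𝕏,
      Tendsto (fun k => X (t₀ + θ k) * P * Xinv (t₀ + θ k)) atTop (𝓝 L) := by
  have hd := HasDichotomyEstimates.of_exponential ⟨hX, hXinv, hXinv'⟩ hd₁ hd₂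
  have hγ : 1 < (1 + α₁) * (1 + α₂) := by nlinarith
  exact stmt_6_general (fun k ↦ hd.translate (θ k)) (tendsto_geometric_rates_mul hγ β₁ β₂) hconv t₀
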